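/- Let (X,d) be a bicomplete T0-quasi-metric space and J : X → X a single-valued map continuous with respect to d^s such that r·d(x,y) ≤ d(Jx,Jy) for all x,y ∈ X, for some constant r > 0. Let F : X → CB(X) be a set-valued map satisfying H(Fx,Fy) ≤ α·[d(Jx,Fx) + d(Jy,Fy)] for all x,y ∈ X, where α ∈ (0,1/2). If J and F have the approximate mix-point property, i.e. inf_{x∈X} sup_{y∈Fx} d^s(Jx,y) = 0, then F has a J-fixed point, i.e. there exists x ∈ X with Jx ∈ Fx. -/

import Mathlib

open Set Filter
open scoped ENNReal

noncomputable section

/-- The symmetrization `d^s(x,y) = max (d x y) (d y x)` of a quasi-pseudometric. -/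
def symm2 {X : Type*} (d : X → X → ℝ) (x y : X) : ℝ := max (d x y) (d y x)

/-- The (extended) Hausdorff-type distance
`H(A,B) = max (sup_{a∈A} inf_{b∈B} d a b) (sup_{b∈B} inf_{a∈A} d a b)`. -/
def qH {X : Type*} (d : X → X → ℝ) (A B : Set X) : ℝ≥0∞ :=
  max (⨆ a ∈ A, ⨅ b ∈ B, ENNReal.ofReal (d a b))
      (⨆ b ∈ B, ⨅ a ∈ A, ENNReal.ofReal (d a b))

/-- Distance from a point to a set: `d(x,A) = inf_{a∈A} d x a`. -/
def dPS {X : Type*} (d : X → X → ℝ) (x : X) (A : Set X) : ℝ≥0∞ :=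
  ⨅ a ∈ A, ENNReal.ofReal (d x a)

/-- Distance from a set to a point: `d(A,x) = inf_{a∈A} d a x`. -/
def dSP {X : Type*} (d : X → X → ℝ) (A : Set X) (x : X) : ℝ≥0∞ :=
  ⨅ a ∈ A, ENNReal.ofReal (d a x)

/-! Let `δ x` be the supremum of the symmetrized distances from `J x` to the points of `F x`; a zero
of `δ` is a point with `F x = {J x}`. Going from `J x` to `J y` through `F x` and `F y` gives
`r d(x, y) ≤ (1 + α) (δ x + δ y)`, so a sequence along which `δ` tends to `0` is Cauchy. At its
limit `l` the contraction gives `δ l ≤ α d(J l, F l)`. Since `d(J l, F l)` is finite, at most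
`δ l`, and `α < 1`, it follows that `δ l = 0`. -/

section SupDist

variable {X : Type*} {d : X → X → ℝ} {x y : X} {A B : Set X}

theorem ofReal_symm2 (d : X → X → ℝ) (x y : X) :
    ENNReal.ofReal (symm2 d x y) = max (ENNReal.ofReal (d x y)) (ENNReal.ofReal (d y x)) :=
  ENNReal.ofReal_max _ _

theorem symm2_comm (d : X → X → ℝ) (x y : X) : symm2 d x y = symm2 d y x :=
  max_comm _ _

theorem ofReal_le_add (hd_tri : ∀ x y z : X, d x z ≤ d x y + d y z) (x y z : X) :
    ENNReal.ofReal (d x z) ≤ ENNReal.ofReal (d x y) + ENNReal.ofReal (d y z) :=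
  (ENNReal.ofReal_le_ofReal (hd_tri x y z)).trans ENNReal.ofReal_add_le

theorem symm2_le_add (hd_tri : ∀ x y z : X, d x z ≤ d x y + d y z) (x y z : X) :
    symm2 d x z ≤ symm2 d x y + symm2 d y z :=
  max_le
    ((hd_tri x y z).trans (add_le_add (le_max_left _ _) (le_max_left _ _)))
    ((hd_tri z y x).trans
      ((add_comm _ _).trans_le (add_le_add (le_max_right _ _) (le_max_right _ _))))

/-- The farthest symmetrized distance `sup_{a ∈ A} d^s(x, a)` from a point to a set, as an extended
nonnegative real. At `(J x, F x)` it measures how far `x` is from being a mix-point of `J` and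
`F`. -/
def supDist (d : X → X → ℝ) (x : X) (A : Set X) : ℝ≥0∞ :=
  ⨆ a ∈ A, ENNReal.ofReal (symm2 d x a)

theorem ofReal_symm2_le_supDist {a : X} (ha : a ∈ A) :
    ENNReal.ofReal (symm2 d x a) ≤ supDist d x A :=
  le_iSup₂ (f := fun a (_ : a ∈ A) => ENNReal.ofReal (symm2 d x a)) a ha

theorem ofReal_le_supDist {a : X} (ha : a ∈ A) : ENNReal.ofReal (d x a) ≤ supDist d x A :=
  (ENNReal.ofReal_le_ofReal (le_max_left _ _)).trans (ofReal_symm2_le_supDist ha)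

theorem ofReal_swap_le_supDist {a : X} (ha : a ∈ A) : ENNReal.ofReal (d a x) ≤ supDist d x A :=
  (ENNReal.ofReal_le_ofReal (le_max_right _ _)).trans (ofReal_symm2_le_supDist ha)

theorem dPS_le_supDist (hA : A.Nonempty) : dPS d x A ≤ supDist d x A :=
  let ⟨_, ha⟩ := hA
  (iInf₂_le _ ha).trans (ofReal_le_supDist ha)

theorem dPS_ne_top (hA : A.Nonempty) : dPS d x A ≠ ⊤ :=
  let ⟨_, ha⟩ := hA
  ne_top_of_le_ne_top ENNReal.ofReal_ne_top (iInf₂_le _ ha)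

theorem dPS_le_qH {a : X} (ha : a ∈ A) : dPS d a B ≤ qH d A B :=
  (le_iSup₂ (f := fun a (_ : a ∈ A) => dPS d a B) a ha).trans (le_max_left _ _)

theorem dSP_le_qH {b : X} (hb : b ∈ B) : dSP d A b ≤ qH d A B :=
  (le_iSup₂ (f := fun b (_ : b ∈ B) => dSP d A b) b hb).trans (le_max_right _ _)

theorem ofReal_le_supDist_add_dSP (hd_tri : ∀ x y z : X, d x z ≤ d x y + d y z) :
    ENNReal.ofReal (d x y) ≤ supDist d x A + dSP d A y := by
  simp only [dSP, ENNReal.add_iInf]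
  exact le_iInf₂ fun a ha =>
    (ofReal_le_add hd_tri x a y).trans (add_le_add_left (ofReal_le_supDist ha) _)

theorem ofReal_le_dPS_add_supDist (hd_tri : ∀ x y z : X, d x z ≤ d x y + d y z) :
    ENNReal.ofReal (d x y) ≤ dPS d x A + supDist d y A := by
  simp only [dPS, ENNReal.iInf_add]
  exact le_iInf₂ fun a ha =>
    (ofReal_le_add hd_tri x a y).trans (add_le_add_right (ofReal_swap_le_supDist ha) _)

theorem supDist_le_ofReal_symm2_add_supDist (hd_tri : ∀ x y z : X, d x z ≤ d x y + d y z) :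
    supDist d x A ≤ ENNReal.ofReal (symm2 d x y) + supDist d y A :=
  iSup₂_le fun a ha =>
    (ofReal_le_add (symm2_le_add hd_tri) x y a).trans
      (add_le_add_right (ofReal_symm2_le_supDist ha) _)

theorem supDist_le_add_max_qH (hd_tri : ∀ x y z : X, d x z ≤ d x y + d y z) :
    supDist d x B ≤ supDist d x A + max (qH d A B) (qH d B A) := by
  refine iSup₂_le fun b hb => ?_
  rw [ofReal_symm2]
  refine max_le ?_ ?_
  · calc ENNReal.ofReal (d x b)
        ≤ supDist d x A + dSP d A b := ofReal_le_supDist_add_dSP hd_tri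
      _ ≤ supDist d x A + max (qH d A B) (qH d B A) := by
        gcongr; exact (dSP_le_qH hb).trans (le_max_left _ _)
  · calc ENNReal.ofReal (d b x)
        ≤ dPS d b A + supDist d x A := ofReal_le_dPS_add_supDist hd_tri
      _ ≤ max (qH d A B) (qH d B A) + supDist d x A := by
        gcongr; exact (dPS_le_qH hb).trans (le_max_right _ _)
      _ = supDist d x A + max (qH d A B) (qH d B A) := add_comm _ _

theorem ofReal_le_supDist_add_qH_add_supDist (hd_tri : ∀ x y z : X, d x z ≤ d x y + d y z)
    (hA : A.Nonempty) :
    ENNReal.ofReal (d x y) ≤ supDist d x A + (qH d A B + supDist d y B) := by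
  obtain ⟨a, ha⟩ := hA
  calc ENNReal.ofReal (d x y)
      ≤ ENNReal.ofReal (d x a) + ENNReal.ofReal (d a y) := ofReal_le_add hd_tri x a y
    _ ≤ supDist d x A + (dPS d a B + supDist d y B) :=
      add_le_add (ofReal_le_supDist ha) (ofReal_le_dPS_add_supDist hd_tri)
    _ ≤ supDist d x A + (qH d A B + supDist d y B) := by
      gcongr; exact dPS_le_qH ha

theorem supDist_eq_zero_of_le_mul_dPS {α : ℝ≥0∞} (hA : A.Nonempty) (hα : α < 1)
    (h : supDist d x A ≤ α * dPS d x A) : supDist d x A = 0 := by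
  have hdPS : dPS d x A = 0 := by
    by_contra hne
    have hlt : α * dPS d x A < 1 * dPS d x A :=
      (ENNReal.mul_lt_mul_iff_left hne (dPS_ne_top hA)).2 hα
    exact (((dPS_le_supDist hA).trans h).trans_lt hlt).ne (one_mul _).symm
  simpa only [hdPS, mul_zero, le_zero_iff] using h

theorem eq_singleton_of_supDist_eq_zero (hd_nonneg : ∀ x y : X, 0 ≤ d x y)
    (hd_T0 : ∀ x y : X, d x y = 0 → d y x = 0 → x = y) (hA : A.Nonempty)
    (h : supDist d x A = 0) : A = {x} := by
  refine eq_singleton_iff_nonempty_unique_mem.2 ⟨hA, fun a ha => ?_⟩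
  have hle : symm2 d x a ≤ 0 := ENNReal.ofReal_eq_zero.1 <|
    le_zero_iff.1 ((ofReal_symm2_le_supDist ha).trans_eq h)
  obtain ⟨hxa, hax⟩ := max_le_iff.1 hle
  exact hd_T0 a x (hax.antisymm (hd_nonneg a x)) (hxa.antisymm (hd_nonneg x a))

end SupDist

section Bicomplete

variable {X : Type*} {d : X → X → ℝ}

theorem exists_seq_tendsto_zero_of_iInf_eq_zero {ι : Type*} {f : ι → ℝ≥0∞}
    (h : ⨅ i, f i = 0) : ∃ u : ℕ → ι, Tendsto (f ∘ u) atTop (nhds 0) := by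
  have hlt : ∀ n : ℕ, ∃ i, f i < (n : ℝ≥0∞)⁻¹ := fun n =>
    iInf_lt_iff.1 (h.trans_lt (ENNReal.inv_pos.2 (ENNReal.natCast_ne_top n)))
  choose u hu using hlt
  exact ⟨u, tendsto_of_tendsto_of_tendsto_of_le_of_le tendsto_const_nhds
    ENNReal.tendsto_inv_nat_nhds_zero (fun _ => zero_le) fun n => (hu n).le⟩

theorem tendsto_ofReal_symm2_zero_iff {u : ℕ → X} {l : X} :
    Tendsto (fun n => ENNReal.ofReal (symm2 d (u n) l)) atTop (nhds 0) ↔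
      ∀ ε : ℝ, 0 < ε → ∃ N : ℕ, ∀ n ≥ N, symm2 d (u n) l < ε := by
  simp only [ENNReal.nhds_zero_basis.tendsto_right_iff, mem_Iio, eventually_atTop]
  refine ⟨fun h ε hε => ?_, fun h ε hε => ?_⟩
  · simpa only [ENNReal.ofReal_lt_ofReal_iff hε] using h _ (ENNReal.ofReal_pos.2 hε)
  · obtain ⟨η, hη, hηε⟩ := ENNReal.lt_iff_exists_nnreal_btwn.1 hε
    obtain ⟨N, hN⟩ := h η (ENNReal.coe_pos.1 hη)
    refine ⟨N, fun n hn => lt_of_le_of_lt ?_ hηε⟩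
    exact ENNReal.ofReal_le_of_le_toReal (hN n hn).le

theorem exists_tendsto_of_symm2_le_mul_add
    (hbicomplete : ∀ u : ℕ → X,
      (∀ ε : ℝ, 0 < ε → ∃ N : ℕ, ∀ m ≥ N, ∀ n ≥ N, symm2 d (u m) (u n) < ε) →
      ∃ l : X, ∀ ε : ℝ, 0 < ε → ∃ N : ℕ, ∀ n ≥ N, symm2 d (u n) l < ε)
    {φ : X → ℝ≥0∞} {K : ℝ≥0∞} (hK : K ≠ ⊤)
    (hφ : ∀ x y : X, ENNReal.ofReal (symm2 d x y) ≤ K * (φ x + φ y))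
    {u : ℕ → X} (hu : Tendsto (φ ∘ u) atTop (nhds 0)) :
    ∃ l : X, Tendsto (fun n => ENNReal.ofReal (symm2 d (u n) l)) atTop (nhds 0) := by
  simp only [tendsto_ofReal_symm2_zero_iff]
  refine hbicomplete u fun ε hε => ?_
  have hlim : Tendsto (fun p : ℕ × ℕ => K * (φ (u p.1) + φ (u p.2))) atTop (nhds 0) := by
    rw [← prod_atTop_atTop_eq]
    simpa only [Function.comp_apply, add_zero, mul_zero] using
      ENNReal.Tendsto.const_mul
        ((hu.comp tendsto_fst).add (hu.comp tendsto_snd)) (Or.inr hK)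
  obtain ⟨N, hN⟩ := eventually_atTop_prod_self'.1
    (hlim.eventually_lt_const (ENNReal.ofReal_pos.2 hε))
  exact ⟨N, fun m hm n hn =>
    (ENNReal.ofReal_lt_ofReal_iff hε).1 ((hφ _ _).trans_lt (hN m hm n hn))⟩

theorem tendsto_symm2_comp {J : X → X} {u : ℕ → X} {l : X}
    (hJ : ∀ ε : ℝ, 0 < ε → ∃ δ : ℝ, 0 < δ ∧
      ∀ y : X, symm2 d l y < δ → symm2 d (J l) (J y) < ε)
    (hu : Tendsto (fun n => ENNReal.ofReal (symm2 d (u n) l)) atTop (nhds 0)) :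
    Tendsto (fun n => ENNReal.ofReal (symm2 d (J (u n)) (J l))) atTop (nhds 0) := by
  refine (tendsto_ofReal_symm2_zero_iff (u := J ∘ u)).2 fun ε hε => ?_
  obtain ⟨δ, hδ, hJδ⟩ := hJ ε hε
  obtain ⟨N, hN⟩ := tendsto_ofReal_symm2_zero_iff.1 hu δ hδ
  refine ⟨N, fun n hn => ?_⟩
  rw [symm2_comm]
  exact hJδ (u n) (symm2_comm d l (u n) ▸ hN n hn)

end Bicomplete

section Kannan

variable {X : Type*} {d : X → X → ℝ} {J : X → X} {F : X → Set X} {α : ℝ≥0∞}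

theorem symm2_le_mul_supDist_add_supDist (hd_tri : ∀ x y z : X, d x z ≤ d x y + d y z)
    {r : ℝ} (hr : 0 < r) (hJ_exp : ∀ x y : X, r * d x y ≤ d (J x) (J y))
    (hF_ne : ∀ x : X, (F x).Nonempty)
    (hcontr : ∀ x y : X, qH d (F x) (F y) ≤ α * (dPS d (J x) (F x) + dPS d (J y) (F y)))
    (x y : X) :
    ENNReal.ofReal (symm2 d x y) ≤
      (1 + α) / ENNReal.ofReal r * (supDist d (J x) (F x) + supDist d (J y) (F y)) := by
  have hone : ∀ x y : X, ENNReal.ofReal (d x y) ≤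
      (1 + α) / ENNReal.ofReal r * (supDist d (J x) (F x) + supDist d (J y) (F y)) := by
    intro x y
    rw [div_eq_mul_inv, mul_right_comm, ← div_eq_mul_inv, ENNReal.le_div_iff_mul_le
      (Or.inl (ENNReal.ofReal_pos.2 hr).ne') (Or.inl ENNReal.ofReal_ne_top)]
    calc ENNReal.ofReal (d x y) * ENNReal.ofReal r
        ≤ ENNReal.ofReal (d (J x) (J y)) := by
          rw [mul_comm, ← ENNReal.ofReal_mul hr.le]
          exact ENNReal.ofReal_le_ofReal (hJ_exp x y)
      _ ≤ supDist d (J x) (F x) + (qH d (F x) (F y) + supDist d (J y) (F y)) :=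
          ofReal_le_supDist_add_qH_add_supDist hd_tri (hF_ne x)
      _ ≤ supDist d (J x) (F x) + (α * (supDist d (J x) (F x) + supDist d (J y) (F y)) +
            supDist d (J y) (F y)) := by
          gcongr
          refine (hcontr x y).trans ?_
          gcongr <;> exact dPS_le_supDist (hF_ne _)
      _ = (1 + α) * (supDist d (J x) (F x) + supDist d (J y) (F y)) := by ring
  rw [ofReal_symm2]
  exact max_le (hone x y) ((hone y x).trans_eq (by rw [add_comm (supDist d (J y) (F y))]))

theorem supDist_le_mul_dPS_of_tendsto (hd_tri : ∀ x y z : X, d x z ≤ d x y + d y z)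
    (hF_ne : ∀ x : X, (F x).Nonempty) (hα : α ≠ ⊤)
    (hcontr : ∀ x y : X, qH d (F x) (F y) ≤ α * (dPS d (J x) (F x) + dPS d (J y) (F y)))
    {u : ℕ → X} {l : X} (hu : Tendsto (fun n => supDist d (J (u n)) (F (u n))) atTop (nhds 0))
    (hJu : Tendsto (fun n => ENNReal.ofReal (symm2 d (J (u n)) (J l))) atTop (nhds 0)) :
    supDist d (J l) (F l) ≤ α * dPS d (J l) (F l) := by
  have hbound : ∀ n, supDist d (J l) (F l) ≤
      ENNReal.ofReal (symm2 d (J (u n)) (J l)) + (supDist d (J (u n)) (F (u n)) +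
        α * (supDist d (J (u n)) (F (u n)) + dPS d (J l) (F l))) := by
    intro n
    have hmax : max (qH d (F (u n)) (F l)) (qH d (F l) (F (u n))) ≤
        α * (supDist d (J (u n)) (F (u n)) + dPS d (J l) (F l)) :=
      calc max (qH d (F (u n)) (F l)) (qH d (F l) (F (u n)))
          ≤ α * (dPS d (J (u n)) (F (u n)) + dPS d (J l) (F l)) :=
            max_le (hcontr _ _) ((hcontr _ _).trans_eq (by rw [add_comm]))
        _ ≤ α * (supDist d (J (u n)) (F (u n)) + dPS d (J l) (F l)) := by
            gcongr; exact dPS_le_supDist (hF_ne _)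
    rw [symm2_comm]
    refine (supDist_le_ofReal_symm2_add_supDist hd_tri (y := J (u n))).trans ?_
    gcongr
    exact (supDist_le_add_max_qH hd_tri).trans (add_le_add_right hmax _)
  have hlim := hJu.add (hu.add
    (ENNReal.Tendsto.const_mul (hu.add_const (dPS d (J l) (F l))) (Or.inr hα)))
  simp only [zero_add] at hlim
  exact ge_of_tendsto' hlim hbound

end Kannan

theorem stmt9_general {X : Type*} (d : X → X → ℝ)
    (hd_nonneg : ∀ x y : X, 0 ≤ d x y)
    (hd_tri : ∀ x y z : X, d x z ≤ d x y + d y z)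
    (hd_T0 : ∀ x y : X, d x y = 0 → d y x = 0 → x = y)
    (hbicomplete : ∀ u : ℕ → X,
      (∀ ε : ℝ, 0 < ε → ∃ N : ℕ, ∀ m ≥ N, ∀ n ≥ N, symm2 d (u m) (u n) < ε) →
      ∃ l : X, ∀ ε : ℝ, 0 < ε → ∃ N : ℕ, ∀ n ≥ N, symm2 d (u n) l < ε)
    (J : X → X)
    (hJ_cont : ∀ x : X, ∀ ε : ℝ, 0 < ε → ∃ δ : ℝ, 0 < δ ∧
      ∀ y : X, symm2 d x y < δ → symm2 d (J x) (J y) < ε)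
    (r : ℝ) (hr : 0 < r)
    (hJ_exp : ∀ x y : X, r * d x y ≤ d (J x) (J y))
    (F : X → Set X)
    (hF_ne : ∀ x : X, (F x).Nonempty)
    (α : ℝ≥0∞) (hα : α < 1)
    (hcontr : ∀ x y : X, qH d (F x) (F y) ≤ α * (dPS d (J x) (F x) + dPS d (J y) (F y)))
    (hmix : (⨅ x : X, ⨆ y ∈ F x, ENNReal.ofReal (symm2 d (J x) y)) = 0) :
    ∃ x : X, F x = {J x} := by
  obtain ⟨u, hu⟩ := exists_seq_tendsto_zero_of_iInf_eq_zero
    (f := fun x => supDist d (J x) (F x)) hmix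
  have hK : (1 + α) / ENNReal.ofReal r ≠ ⊤ :=
    ENNReal.div_ne_top (ENNReal.add_ne_top.2 ⟨ENNReal.one_ne_top, hα.ne_top⟩)
      (ENNReal.ofReal_pos.2 hr).ne'
  obtain ⟨l, hl⟩ := exists_tendsto_of_symm2_le_mul_add hbicomplete hK
    (symm2_le_mul_supDist_add_supDist hd_tri hr hJ_exp hF_ne hcontr) hu
  have hle := supDist_le_mul_dPS_of_tendsto hd_tri hF_ne hα.ne_top hcontr hu
    (tendsto_symm2_comp (hJ_cont l) hl)
  exact ⟨l, eq_singleton_of_supDist_eq_zero hd_nonneg hd_T0 (hF_ne l)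
    (supDist_eq_zero_of_le_mul_dPS (hF_ne l) hα hle)⟩

theorem stmt9 {X : Type*} [Nonempty X]
    (d : X → X → ℝ)
    (hd_nonneg : ∀ x y : X, 0 ≤ d x y)
    (hd_refl : ∀ x : X, d x x = 0)
    (hd_tri : ∀ x y z : X, d x z ≤ d x y + d y z)
    (hd_T0 : ∀ x y : X, d x y = 0 → d y x = 0 → x = y)
    (hbicomplete : ∀ u : ℕ → X,
      (∀ ε : ℝ, 0 < ε → ∃ N : ℕ, ∀ m ≥ N, ∀ n ≥ N, symm2 d (u m) (u n) < ε) →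
      ∃ l : X, ∀ ε : ℝ, 0 < ε → ∃ N : ℕ, ∀ n ≥ N, symm2 d (u n) l < ε)
    (J : X → X)
    (hJ_cont : ∀ x : X, ∀ ε : ℝ, 0 < ε → ∃ δ : ℝ, 0 < δ ∧
      ∀ y : X, symm2 d x y < δ → symm2 d (J x) (J y) < ε)
    (r : ℝ) (hr : 0 < r)
    (hJ_exp : ∀ x y : X, r * d x y ≤ d (J x) (J y))
    (F : X → Set X)
    (hF_ne : ∀ x : X, (F x).Nonempty)
    (hF_bdd : ∀ x : X, ∃ M : ℝ, ∀ a ∈ F x, ∀ c ∈ F x, symm2 d a c ≤ M)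
    (hF_closed : ∀ x : X, ∀ u : ℕ → X, (∀ n : ℕ, u n ∈ F x) → ∀ l : X,
      Filter.Tendsto (fun n => symm2 d (u n) l) Filter.atTop (nhds (0 : ℝ)) → l ∈ F x)
    (α : ℝ) (hα0 : 0 < α) (hα1 : α < 1 / 2)
    (hcontr : ∀ x y : X, qH d (F x) (F y) ≤ ENNReal.ofReal α * (dPS d (J x) (F x) + dPS d (J y) (F y)))
    (hmix : (⨅ x : X, ⨆ y ∈ F x, ENNReal.ofReal (symm2 d (J x) y)) = 0) :
    ∃ x : X, J x ∈ F x := by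
  obtain ⟨x, hx⟩ := stmt9_general d hd_nonneg hd_tri hd_T0 hbicomplete J hJ_cont r hr hJ_exp F
    hF_ne (ENNReal.ofReal α) (ENNReal.ofReal_lt_one.2 (by linarith)) hcontr hmix
  exact ⟨x, hx ▸ mem_singleton (J x)⟩
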